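/- arXiv:1902.03755 — 4 statements merged into one kernel-verified Lean document; each statement's English description precedes it below -/
import Mathlib

section
/- Let n, d, k be positive integers, X ∈ ℝ^{n×d}, and let α, β ∈ [1,∞] with β ≥ α. Then sup{ ‖XU‖_{2×β} : U ∈ ℝ^{d×k}, ‖U‖_{1×α} ≤ 1 } = ‖Xᵀ‖_{∞×2} = max_{1≤i≤d} ‖X(:,i)‖_2, and the supremum is attained. -/
/-!
Row `l` of `XU` is the combination `∑ j, X l j • U j` of the rows of `U`. The triangle inequality
for `ℓ_β`, applied to each row, bounds its norm by `∑ j, |X l j| * ‖U j‖_β`; the triangle inequality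
for the outer norm, applied to the resulting vector indexed by `l`, gives
`‖XU‖_{2×β} ≤ ∑ j, ‖U j‖_β * ‖X(:,j)‖₂ ≤ ‖Xᵀ‖_{∞×2} * ‖U‖_{1×β}`, and `‖U‖_{1×β} ≤ ‖U‖_{1×α}`.
A matrix unit selecting a longest column of `X` attains the bound.
-/

open scoped ENNReal BigOperators
open Matrix

/-- The `ℓ_p` norm of a finitely-indexed real vector, `p ∈ [1,∞]`
(with the sup convention for `p = ∞`). -/
noncomputable def lpNorm {ι : Type*} [Fintype ι] (p : ℝ≥0∞) (v : ι → ℝ) : ℝ :=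
  if p = ∞ then ⨆ i, |v i| else (∑ i, |v i| ^ p.toReal) ^ (1 / p.toReal)

/-- The mixed norm `‖A‖_{p×q}`: the `ℓ_p` norm of the vector of `ℓ_q` norms of the rows. -/
noncomputable def mixedNorm {ι κ : Type*} [Fintype ι] [Fintype κ]
    (p q : ℝ≥0∞) (A : Matrix ι κ ℝ) : ℝ :=
  lpNorm p (fun i => lpNorm q (A i))

section LpNorm

variable {ι κ : Type*} [Fintype ι] {p q : ℝ≥0∞}

theorem lpNorm_top (v : ι → ℝ) : lpNorm ∞ v = ⨆ i, |v i| :=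
  if_pos rfl

theorem lpNorm_of_ne_top (hp : p ≠ ∞) (v : ι → ℝ) :
    lpNorm p v = (∑ i, |v i| ^ p.toReal) ^ (1 / p.toReal) :=
  if_neg hp

theorem lpNorm_one (v : ι → ℝ) : lpNorm 1 v = ∑ i, |v i| := by
  simp [lpNorm_of_ne_top ENNReal.one_ne_top]

theorem lpNorm_nonneg (p : ℝ≥0∞) (v : ι → ℝ) : 0 ≤ lpNorm p v := by
  rcases eq_or_ne p ∞ with rfl | hp
  · rw [lpNorm_top]
    exact Real.iSup_nonneg fun i => abs_nonneg (v i)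
  · rw [lpNorm_of_ne_top hp]
    positivity

theorem lpNorm_abs (p : ℝ≥0∞) (v : ι → ℝ) : lpNorm p (fun i => |v i|) = lpNorm p v := by
  simp only [lpNorm, abs_abs]

theorem lpNorm_rpow_toReal (hp₀ : p ≠ 0) (hp : p ≠ ∞) (v : ι → ℝ) :
    lpNorm p v ^ p.toReal = ∑ i, |v i| ^ p.toReal := by
  rw [lpNorm_of_ne_top hp, one_div,
    Real.rpow_inv_rpow (by positivity) (ENNReal.toReal_pos hp₀ hp).ne']

theorem lpNorm_le_lpNorm_of_abs_le (p : ℝ≥0∞) {v w : ι → ℝ} (h : ∀ i, |v i| ≤ |w i|) :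
    lpNorm p v ≤ lpNorm p w := by
  rcases eq_or_ne p ∞ with rfl | hp
  · simp only [lpNorm_top]
    exact ciSup_mono (Set.finite_range _).bddAbove h
  · simp only [lpNorm_of_ne_top hp]
    gcongr ?_ ^ (1 / p.toReal)
    exact Finset.sum_le_sum fun i _ => Real.rpow_le_rpow (abs_nonneg _) (h i) (by positivity)

theorem abs_apply_le_lpNorm (hp₀ : p ≠ 0) (v : ι → ℝ) (i : ι) : |v i| ≤ lpNorm p v := by
  rcases eq_or_ne p ∞ with rfl | hp
  · rw [lpNorm_top]
    exact Finite.le_ciSup (fun i => |v i|) i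
  · rw [← Real.rpow_le_rpow_iff (abs_nonneg _) (lpNorm_nonneg p v) (ENNReal.toReal_pos hp₀ hp),
      lpNorm_rpow_toReal hp₀ hp]
    exact Finset.single_le_sum (f := fun i => |v i| ^ p.toReal) (fun i _ => by positivity)
      (Finset.mem_univ i)

theorem lpNorm_single [DecidableEq ι] (hp₀ : p ≠ 0) (i : ι) (c : ℝ) :
    lpNorm p (Pi.single i c) = |c| := by
  rcases eq_or_ne p ∞ with rfl | hp
  · refine le_antisymm ?_ (by simpa using abs_apply_le_lpNorm hp₀ (Pi.single i c) i)
    rw [lpNorm_top]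
    refine Real.iSup_le (fun j => ?_) (abs_nonneg c)
    rcases eq_or_ne j i with rfl | hj <;> simp [*]
  · have hp_pos := ENNReal.toReal_pos hp₀ hp
    rw [lpNorm_of_ne_top hp, Finset.sum_eq_single_of_mem i (Finset.mem_univ i)]
    · rw [Pi.single_eq_same, one_div, Real.rpow_rpow_inv (abs_nonneg c) hp_pos.ne']
    · intro j _ hj
      rw [Pi.single_eq_of_ne hj, abs_zero, Real.zero_rpow hp_pos.ne']

theorem lpNorm_antitone_exponent (hp₀ : p ≠ 0) (hpq : p ≤ q) (v : ι → ℝ) :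
    lpNorm q v ≤ lpNorm p v := by
  have hv := lpNorm_nonneg p v
  rcases eq_or_ne q ∞ with rfl | hq
  · rw [lpNorm_top]
    exact Real.iSup_le (abs_apply_le_lpNorm hp₀ v) hv
  have hp : p ≠ ∞ := ne_top_of_le_ne_top hq hpq
  have hq₀ : q ≠ 0 := (hp₀.bot_lt.trans_le hpq).ne'
  have hp_nonneg : 0 ≤ p.toReal := ENNReal.toReal_nonneg
  have hsub : 0 ≤ q.toReal - p.toReal := sub_nonneg.2 (ENNReal.toReal_mono hq hpq)
  have rpow_split {x : ℝ} (hx : 0 ≤ x) :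
      x ^ q.toReal = x ^ p.toReal * x ^ (q.toReal - p.toReal) := by
    rw [← Real.rpow_add_of_nonneg hx hp_nonneg hsub, add_sub_cancel]
  rw [← Real.rpow_le_rpow_iff (lpNorm_nonneg q v) hv (ENNReal.toReal_pos hq₀ hq)]
  calc lpNorm q v ^ q.toReal
      = ∑ i, |v i| ^ p.toReal * |v i| ^ (q.toReal - p.toReal) := by
        rw [lpNorm_rpow_toReal hq₀ hq]
        exact Finset.sum_congr rfl fun i _ => rpow_split (abs_nonneg _)
    _ ≤ ∑ i, |v i| ^ p.toReal * lpNorm p v ^ (q.toReal - p.toReal) := by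
        gcongr with i
        exact abs_apply_le_lpNorm hp₀ v i
    _ = lpNorm p v ^ q.toReal := by
        rw [← Finset.sum_mul, ← lpNorm_rpow_toReal hp₀ hp, ← rpow_split hv]

theorem lpNorm_eq_norm_toLp [Fact (1 ≤ p)] (v : ι → ℝ) : lpNorm p v = ‖WithLp.toLp p v‖ := by
  rcases eq_or_ne p ∞ with rfl | hp
  · simp only [lpNorm_top, PiLp.norm_eq_ciSup, Real.norm_eq_abs]
  · have hp_pos := ENNReal.toReal_pos (zero_lt_one.trans_le Fact.out).ne' hp
    simp only [lpNorm_of_ne_top hp, PiLp.norm_eq_sum hp_pos, Real.norm_eq_abs]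

theorem lpNorm_sum_smul_le (hp : 1 ≤ p) (s : Finset κ) (c : κ → ℝ) (v : κ → ι → ℝ) :
    lpNorm p (∑ j ∈ s, c j • v j) ≤ ∑ j ∈ s, |c j| * lpNorm p (v j) := by
  have : Fact (1 ≤ p) := ⟨hp⟩
  simpa only [lpNorm_eq_norm_toLp, WithLp.toLp_sum, WithLp.toLp_smul, norm_smul, Real.norm_eq_abs]
    using norm_sum_le s fun j => c j • WithLp.toLp p (v j)

theorem lpNorm_vecMul_le [Fintype κ] (hp : 1 ≤ p) (a : κ → ℝ) (B : Matrix κ ι ℝ) :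
    lpNorm p (a ᵥ* B) ≤ ∑ j, |a j| * lpNorm p (B j) := by
  rw [Matrix.vecMul_eq_sum]
  exact lpNorm_sum_smul_le hp Finset.univ a B

end LpNorm

section MixedNorm

variable {ι κ μ : Type*} [Fintype ι] [Fintype κ] {p q r : ℝ≥0∞}

theorem mixedNorm_one_left (q : ℝ≥0∞) (A : Matrix ι κ ℝ) :
    mixedNorm 1 q A = ∑ i, lpNorm q (A i) := by
  simp only [mixedNorm, lpNorm_one, abs_of_nonneg (lpNorm_nonneg q _)]

theorem mixedNorm_top_left (q : ℝ≥0∞) (A : Matrix ι κ ℝ) :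
    mixedNorm ∞ q A = ⨆ i, lpNorm q (A i) := by
  simp only [mixedNorm, lpNorm_top, abs_of_nonneg (lpNorm_nonneg q _)]

theorem mixedNorm_nonneg (p q : ℝ≥0∞) (A : Matrix ι κ ℝ) : 0 ≤ mixedNorm p q A :=
  lpNorm_nonneg p _

theorem lpNorm_row_le_mixedNorm_top (q : ℝ≥0∞) (A : Matrix ι κ ℝ) (i : ι) :
    lpNorm q (A i) ≤ mixedNorm ∞ q A := by
  rw [mixedNorm_top_left]
  exact Finite.le_ciSup (fun i => lpNorm q (A i)) i

theorem exists_lpNorm_row_eq_mixedNorm_top [Nonempty ι] (q : ℝ≥0∞) (A : Matrix ι κ ℝ) :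
    ∃ i, lpNorm q (A i) = mixedNorm ∞ q A := by
  rw [mixedNorm_top_left]
  exact exists_eq_ciSup_of_finite

theorem mixedNorm_antitone_right (p : ℝ≥0∞) (hq₀ : q ≠ 0) (hqr : q ≤ r) (A : Matrix ι κ ℝ) :
    mixedNorm p r A ≤ mixedNorm p q A :=
  lpNorm_le_lpNorm_of_abs_le p fun i =>
    abs_le_abs_of_nonneg (lpNorm_nonneg r _) (lpNorm_antitone_exponent hq₀ hqr (A i))

theorem mixedNorm_single [DecidableEq ι] [DecidableEq κ] (hp₀ : p ≠ 0) (hq₀ : q ≠ 0)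
    (i : ι) (j : κ) (c : ℝ) : mixedNorm p q (Matrix.single i j c) = |c| := by
  have row_eq (l : ι) : Matrix.single i j c l = Pi.single j ((Pi.single i c : ι → ℝ) l) := by
    ext m
    simp only [Matrix.single_apply, Pi.single_apply, eq_comm, ← ite_and, and_comm]
  simp only [mixedNorm, row_eq, lpNorm_single hq₀]
  rw [lpNorm_abs p (Pi.single i c), lpNorm_single hp₀]

theorem mixedNorm_mul_single_one [Fintype μ] [DecidableEq κ] [DecidableEq μ] (p : ℝ≥0∞)
    (hq₀ : q ≠ 0) (A : Matrix ι κ ℝ) (j : κ) (m : μ) :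
    mixedNorm p q (A * Matrix.single j m (1 : ℝ)) = lpNorm p (Aᵀ j) := by
  have row_eq (l : ι) : (A * Matrix.single j m (1 : ℝ)) l = Pi.single m (A l j) := by
    ext m'
    rcases eq_or_ne m' m with rfl | hm
    · rw [Matrix.mul_single_apply_same, mul_one, Pi.single_eq_same]
    · rw [Matrix.mul_single_apply_of_ne _ _ _ _ _ hm, Pi.single_eq_of_ne hm]
  simp only [mixedNorm, row_eq, lpNorm_single hq₀]
  exact lpNorm_abs p (Aᵀ j)

theorem mixedNorm_mul_le [Fintype μ] (hp : 1 ≤ p) (hq : 1 ≤ q) (A : Matrix ι κ ℝ)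
    (B : Matrix κ μ ℝ) : mixedNorm p q (A * B) ≤ mixedNorm ∞ p Aᵀ * mixedNorm 1 q B := by
  let absCol (j : κ) (i : ι) : ℝ := |A i j|
  calc mixedNorm p q (A * B)
      ≤ lpNorm p (∑ j, lpNorm q (B j) • absCol j) := by
        refine lpNorm_le_lpNorm_of_abs_le p fun i => ?_
        refine abs_le_abs_of_nonneg (lpNorm_nonneg q _) ?_
        simpa [absCol, mul_comm, Matrix.mul_apply_eq_vecMul] using lpNorm_vecMul_le hq (A i) B
    _ ≤ ∑ j, |lpNorm q (B j)| * lpNorm p (absCol j) :=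
        lpNorm_sum_smul_le hp Finset.univ _ absCol
    _ = ∑ j, lpNorm p (Aᵀ j) * lpNorm q (B j) :=
        Finset.sum_congr rfl fun j _ => by
          rw [abs_of_nonneg (lpNorm_nonneg q _), mul_comm]
          exact congrArg (· * _) (lpNorm_abs p (Aᵀ j))
    _ ≤ ∑ j, mixedNorm ∞ p Aᵀ * lpNorm q (B j) := by
        gcongr with j
        · exact lpNorm_nonneg q _
        · exact lpNorm_row_le_mixedNorm_top p Aᵀ j
    _ = mixedNorm ∞ p Aᵀ * mixedNorm 1 q B := by
        rw [← Finset.mul_sum, mixedNorm_one_left]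

end MixedNorm

theorem subordinate_norm_one_alpha_to_two_beta_general
    {ι κ μ : Type*} [Fintype ι] [Fintype κ] [Fintype μ] [Nonempty κ] [Nonempty μ]
    (X : Matrix ι κ ℝ) {p α β : ℝ≥0∞} (hp : 1 ≤ p) (hα : α ≠ 0) (hβ : 1 ≤ β) (hαβ : α ≤ β) :
    IsGreatest
      {r : ℝ | ∃ U : Matrix κ μ ℝ, mixedNorm 1 α U ≤ 1 ∧ r = mixedNorm p β (X * U)}
      (mixedNorm ∞ p Xᵀ) ∧
    mixedNorm ∞ p Xᵀ = ⨆ i : κ, lpNorm p (fun l => X l i) := by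
  classical
  refine ⟨⟨?attained, ?upper_bound⟩, mixedNorm_top_left p Xᵀ⟩
  case attained =>
    obtain ⟨j, hj⟩ := exists_lpNorm_row_eq_mixedNorm_top p Xᵀ
    obtain ⟨m⟩ := ‹Nonempty μ›
    refine ⟨Matrix.single j m 1, ?_, ?_⟩
    · rw [mixedNorm_single one_ne_zero hα, abs_one]
    · rw [mixedNorm_mul_single_one p (zero_lt_one.trans_le hβ).ne', hj]
  case upper_bound =>
    rintro _ ⟨U, hU, rfl⟩
    calc mixedNorm p β (X * U)
        ≤ mixedNorm ∞ p Xᵀ * mixedNorm 1 β U := mixedNorm_mul_le hp hβ X U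
      _ ≤ mixedNorm ∞ p Xᵀ :=
        mul_le_of_le_one_right (mixedNorm_nonneg ∞ p Xᵀ)
          ((mixedNorm_antitone_right 1 hα hαβ U).trans hU)

/-- Proposition "th:lip-general": for `α, β ∈ [1,∞]` with `β ≥ α`,
`sup { ‖XU‖_{2×β} : ‖U‖_{1×α} ≤ 1 } = ‖Xᵀ‖_{∞×2} = max_i ‖X(:,i)‖₂`, the sup being attained. -/
theorem subordinate_norm_one_alpha_to_two_beta
    (n d k : ℕ) (hn : 0 < n) (hd : 0 < d) (hk : 0 < k)
    (X : Matrix (Fin n) (Fin d) ℝ)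
    (α β : ℝ≥0∞) (hα : 1 ≤ α) (hβ : 1 ≤ β) (hαβ : α ≤ β) :
    IsGreatest
      {r : ℝ | ∃ U : Matrix (Fin d) (Fin k) ℝ,
        mixedNorm 1 α U ≤ 1 ∧ r = mixedNorm 2 β (X * U)}
      (mixedNorm ∞ 2 Xᵀ) ∧
    mixedNorm ∞ 2 Xᵀ = ⨆ i : Fin d, lpNorm 2 (fun l => X l i) := by
  have := NeZero.of_pos hd
  have := NeZero.of_pos hk
  exact subordinate_norm_one_alpha_to_two_beta_general X one_le_two (one_pos.trans_le hα).ne' hβ hαβ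
end

section
/- Let m ≥ 1, let X⁰ ∈ ℝ^m have strictly positive entries, let S ∈ ℝ^m, C₁ ∈ ℝ, C₂ > 0 and R > 0. Define M = Σ_{j=1}^m X⁰_j·exp(−S_j/C₂), ρ = min( M·exp(−(C₁+C₂)/C₂), R ), and X¹_i = ρ·X⁰_i·exp(−S_i/C₂)/M. Then X¹ is the unique minimizer over the set { X ∈ ℝ^m : X_i ≥ 0 for all i, Σ_i X_i ≤ R } of the function X ↦ C₁·Σ_i X_i + ⟨S, X⟩ + C₂·Σ_{i=1}^m X_i·log(X_i/X⁰_i), where the convention 0·log 0 = 0 is used. -/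
open scoped BigOperators

/-!
Write `g i = X0 i * exp (-S i / C2)`. For every `t > 0` the cost differs from `C2` times the
relative entropy with respect to `t • g` by an affine function of the total mass `∑ i, X i`, of
slope `C1 + C2 + C2 * log t`. Choosing `t` so that `t • g` has mass `ρ` makes this slope either zero
(the mass constraint is slack) or nonpositive with `ρ = R`, so no feasible point gains from the
affine part, while the relative entropy is positive away from `t • g`.
-/

section

open InformationTheory Real

lemma mul_log_div_mul {x y c : ℝ} (hy : y ≠ 0) (hc : c ≠ 0) :
    x * log (x / (y * c)) = x * log (x / y) - x * log c := by
  rcases eq_or_ne x 0 with rfl | hx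
  · simp
  · rw [← div_div, log_div (div_ne_zero hx hy) hc, mul_sub]

lemma mul_klFun_div (x : ℝ) {y : ℝ} (hy : y ≠ 0) :
    y * klFun (x / y) = x * log (x / y) + y - x := by
  rw [klFun]
  field_simp

-- Complementary slackness: with `ρ` the minimum, `-(c + b * log (ρ / M))` is the multiplier of the
-- constraint `s ≤ R`.
lemma add_mul_log_min_div_mul_sub_nonneg {b c M R s : ℝ} (hb : 0 < b) (hM : 0 < M) (hR : 0 < R)
    (hs : s ≤ R) :
    0 ≤ (c + b * log (min (M * exp (-c / b)) R / M)) * (s - min (M * exp (-c / b)) R) := by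
  rcases le_total (M * exp (-c / b)) R with h | h
  · have hslope : c + b * log (M * exp (-c / b) / M) = 0 := by
      rw [mul_div_cancel_left₀ _ hM.ne', log_exp, mul_div_cancel₀ _ hb.ne', add_neg_cancel]
    rw [min_eq_left h, hslope, zero_mul]
  · have hlog : log (R / M) ≤ -c / b :=
      (log_le_iff_le_exp (div_pos hR hM)).mpr ((div_le_iff₀' hM).mpr h)
    have hslope : b * log (R / M) ≤ -c := (le_div_iff₀' hb).mp hlog
    rw [min_eq_right h]
    exact mul_nonneg_of_nonpos_of_nonpos (by linarith) (by linarith)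

variable {ι : Type*}

/-- The Gibbs weights at temperature `T` with reference weights `X0` and energies `S`; the
minimizers are multiples of them. -/
noncomputable def gibbsWeight (X0 S : ι → ℝ) (T : ℝ) (i : ι) : ℝ :=
  X0 i * exp (-S i / T)

lemma gibbsWeight_pos {X0 : ι → ℝ} (hX0 : ∀ i, 0 < X0 i) (S : ι → ℝ) (T : ℝ) (i : ι) :
    0 < gibbsWeight X0 S T i :=
  mul_pos (hX0 i) (exp_pos _)

variable [Fintype ι]

/-- The generalized Kullback–Leibler divergence `∑ i, (x i * log (x i / y i) + y i - x i)` of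
vectors that need not have equal mass, for `y i ≠ 0`. It measures how far a competitor is from the
minimizer, and is written through `klFun` to make its nonnegativity termwise. -/
noncomputable def relEntropy (x y : ι → ℝ) : ℝ :=
  ∑ i, y i * klFun (x i / y i)

/-- The objective of the entropic proximal step. The convention `0 * log 0 = 0` is built in, since
`Real.log 0 = 0`. -/
noncomputable def entropicCost (X0 S : ι → ℝ) (C1 C2 : ℝ) (X : ι → ℝ) : ℝ :=
  C1 * (∑ i, X i) + (∑ i, S i * X i) + C2 * (∑ i, X i * log (X i / X0 i))

/-- The total mass `ρ` of the minimizer: the mass of the unconstrained minimizer, cut off at `R`. -/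
noncomputable def proxMass (X0 S : ι → ℝ) (C1 C2 R : ℝ) : ℝ :=
  min ((∑ i, gibbsWeight X0 S C2 i) * exp (-(C1 + C2) / C2)) R

/-- The entropic proximal point `X¹`: the multiple of the Gibbs weights of mass `proxMass`. -/
noncomputable def entropicProx (X0 S : ι → ℝ) (C1 C2 R : ℝ) (i : ι) : ℝ :=
  proxMass X0 S C1 C2 R * gibbsWeight X0 S C2 i / ∑ j, gibbsWeight X0 S C2 j

lemma relEntropy_self {x : ι → ℝ} (hx : ∀ i, x i ≠ 0) : relEntropy x x = 0 := by
  simp [relEntropy, hx, klFun_one]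

lemma relEntropy_pos {x y : ι → ℝ} (hx : ∀ i, 0 ≤ x i) (hy : ∀ i, 0 < y i) (hne : x ≠ y) :
    0 < relEntropy x y := by
  have hratio (i : ι) : 0 ≤ x i / y i := div_nonneg (hx i) (hy i).le
  obtain ⟨k, hk⟩ := Function.ne_iff.mp hne
  have hkl : klFun (x k / y k) ≠ 0 := by
    rwa [Ne, klFun_eq_zero_iff (hratio k), div_eq_one_iff_eq (hy k).ne']
  exact Finset.sum_pos' (fun i _ => mul_nonneg (hy i).le (klFun_nonneg (hratio i)))
    ⟨k, Finset.mem_univ k, mul_pos (hy k) ((klFun_nonneg (hratio k)).lt_of_ne' hkl)⟩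

lemma sum_gibbsWeight_pos [Nonempty ι] {X0 : ι → ℝ} (hX0 : ∀ i, 0 < X0 i) (S : ι → ℝ) (T : ℝ) :
    0 < ∑ i, gibbsWeight X0 S T i :=
  Finset.sum_pos (fun i _ => gibbsWeight_pos hX0 S T i) Finset.univ_nonempty

lemma mul_relEntropy_smul_gibbsWeight {X0 : ι → ℝ} (hX0 : ∀ i, X0 i ≠ 0) (S : ι → ℝ) (C1 : ℝ)
    {C2 t : ℝ} (hC2 : C2 ≠ 0) (ht : t ≠ 0) (X : ι → ℝ) :
    C2 * relEntropy X (t • gibbsWeight X0 S C2) =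
      entropicCost X0 S C1 C2 X - (C1 + C2 + C2 * log t) * ∑ i, X i
        + C2 * (t * ∑ i, gibbsWeight X0 S C2 i) := by
  have hterm (i : ι) : C2 * ((t • gibbsWeight X0 S C2) i *
        klFun (X i / (t • gibbsWeight X0 S C2) i)) =
      C1 * X i + S i * X i + C2 * (X i * log (X i / X0 i))
        - (C1 + C2 + C2 * log t) * X i + C2 * (t * gibbsWeight X0 S C2 i) := by
    have hscale : (t • gibbsWeight X0 S C2) i = X0 i * (t * exp (-S i / C2)) :=
      mul_left_comm _ _ _
    have hc : t * exp (-S i / C2) ≠ 0 := mul_ne_zero ht (exp_ne_zero _)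
    rw [hscale, mul_klFun_div _ (mul_ne_zero (hX0 i) hc), mul_log_div_mul (hX0 i) hc,
      log_mul ht (exp_ne_zero _), log_exp, gibbsWeight]
    field_simp
    ring
  simp only [relEntropy, entropicCost, Finset.mul_sum, hterm, Finset.sum_add_distrib,
    Finset.sum_sub_distrib]

lemma entropicCost_sub_smul_gibbsWeight {X0 : ι → ℝ} (hX0 : ∀ i, X0 i ≠ 0) (S : ι → ℝ) (C1 : ℝ)
    {C2 t : ℝ} (hC2 : C2 ≠ 0) (ht : t ≠ 0) (X : ι → ℝ) :
    entropicCost X0 S C1 C2 X - entropicCost X0 S C1 C2 (t • gibbsWeight X0 S C2) =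
      (C1 + C2 + C2 * log t) * (∑ i, X i - t * ∑ i, gibbsWeight X0 S C2 i)
        + C2 * relEntropy X (t • gibbsWeight X0 S C2) := by
  have hself : relEntropy (t • gibbsWeight X0 S C2) (t • gibbsWeight X0 S C2) = 0 :=
    relEntropy_self fun i => mul_ne_zero ht (mul_ne_zero (hX0 i) (exp_ne_zero _))
  have hsum : ∑ i, (t • gibbsWeight X0 S C2) i = t * ∑ i, gibbsWeight X0 S C2 i :=
    (Finset.mul_sum ..).symm
  have hX := mul_relEntropy_smul_gibbsWeight hX0 S C1 hC2 ht X
  have hmin := mul_relEntropy_smul_gibbsWeight hX0 S C1 hC2 ht (t • gibbsWeight X0 S C2)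
  rw [hself, hsum] at hmin
  linarith

lemma entropicProx_eq_smul (X0 S : ι → ℝ) (C1 C2 R : ℝ) :
    entropicProx X0 S C1 C2 R =
      (proxMass X0 S C1 C2 R / ∑ j, gibbsWeight X0 S C2 j) • gibbsWeight X0 S C2 :=
  funext fun _ => mul_div_right_comm _ _ _

section Nonempty

variable [Nonempty ι] {X0 : ι → ℝ} {R : ℝ}

lemma proxMass_pos (hX0 : ∀ i, 0 < X0 i) (S : ι → ℝ) (C1 C2 : ℝ) (hR : 0 < R) :
    0 < proxMass X0 S C1 C2 R :=
  lt_min (mul_pos (sum_gibbsWeight_pos hX0 S C2) (exp_pos _)) hR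

lemma entropicProx_pos (hX0 : ∀ i, 0 < X0 i) (S : ι → ℝ) (C1 C2 : ℝ) (hR : 0 < R) (i : ι) :
    0 < entropicProx X0 S C1 C2 R i :=
  div_pos (mul_pos (proxMass_pos hX0 S C1 C2 hR) (gibbsWeight_pos hX0 S C2 i))
    (sum_gibbsWeight_pos hX0 S C2)

lemma sum_entropicProx (hX0 : ∀ i, 0 < X0 i) (S : ι → ℝ) (C1 C2 R : ℝ) :
    ∑ i, entropicProx X0 S C1 C2 R i = proxMass X0 S C1 C2 R := by
  simp only [entropicProx]
  rw [← Finset.sum_div, ← Finset.mul_sum,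
    mul_div_cancel_right₀ _ (sum_gibbsWeight_pos hX0 S C2).ne']

lemma entropicCost_entropicProx_add_relEntropy_le (hX0 : ∀ i, 0 < X0 i) (S : ι → ℝ) (C1 : ℝ)
    {C2 : ℝ} (hC2 : 0 < C2) (hR : 0 < R) {X : ι → ℝ} (hXR : ∑ i, X i ≤ R) :
    entropicCost X0 S C1 C2 (entropicProx X0 S C1 C2 R)
        + C2 * relEntropy X (entropicProx X0 S C1 C2 R) ≤ entropicCost X0 S C1 C2 X := by
  have hM := sum_gibbsWeight_pos hX0 S C2
  have hscale := div_pos (proxMass_pos hX0 S C1 C2 hR) hM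
  have hsub := entropicCost_sub_smul_gibbsWeight (fun i => (hX0 i).ne') S C1 hC2.ne' hscale.ne' X
  rw [← entropicProx_eq_smul, div_mul_cancel₀ _ hM.ne'] at hsub
  have hslack := add_mul_log_min_div_mul_sub_nonneg (c := C1 + C2) hC2 hM hR hXR
  rw [← proxMass] at hslack
  linarith

theorem entropic_prox_unique_minimizer_general (hX0 : ∀ i, 0 < X0 i) (S : ι → ℝ) (C1 : ℝ)
    {C2 : ℝ} (hC2 : 0 < C2) (hR : 0 < R) :
    ((∀ i, 0 ≤ entropicProx X0 S C1 C2 R i) ∧ ∑ i, entropicProx X0 S C1 C2 R i ≤ R) ∧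
    ∀ X : ι → ℝ, (∀ i, 0 ≤ X i) → ∑ i, X i ≤ R → X ≠ entropicProx X0 S C1 C2 R →
      entropicCost X0 S C1 C2 (entropicProx X0 S C1 C2 R) < entropicCost X0 S C1 C2 X := by
  have hpos := entropicProx_pos hX0 S C1 C2 hR
  refine ⟨⟨fun i => (hpos i).le, ?_⟩, fun X hX hXR hne => ?_⟩
  · rw [sum_entropicProx hX0]
    exact min_le_right _ _
  · calc entropicCost X0 S C1 C2 (entropicProx X0 S C1 C2 R)
        < entropicCost X0 S C1 C2 (entropicProx X0 S C1 C2 R)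
            + C2 * relEntropy X (entropicProx X0 S C1 C2 R) :=
          lt_add_of_pos_right _ (mul_pos hC2 (relEntropy_pos hX hpos hne))
      _ ≤ entropicCost X0 S C1 C2 X :=
          entropicCost_entropicProx_add_relEntropy_le hX0 S C1 hC2 hR hXR

end Nonempty

end

/-- Lemma "lemmaForU": the explicit entropic-proximal minimizer.
`X¹_i = ρ · X⁰_i · exp(−S_i/C₂) / M` is the unique minimizer of
`X ↦ C₁·Σ_i X_i + ⟨S, X⟩ + C₂·Σ_i X_i log(X_i/X⁰_i)` over
`{X : X_i ≥ 0, Σ_i X_i ≤ R}` (with the convention `0 · log 0 = 0`,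
which is automatic here since `Real.log 0 = 0`). -/
theorem entropic_prox_unique_minimizer
    (m : ℕ) (hm : 1 ≤ m)
    (X0 : Fin m → ℝ) (hX0 : ∀ i, 0 < X0 i)
    (S : Fin m → ℝ) (C1 C2 R : ℝ) (hC2 : 0 < C2) (hR : 0 < R)
    (M : ℝ) (hM : M = ∑ j, X0 j * Real.exp (-S j / C2))
    (ρ : ℝ) (hρ : ρ = min (M * Real.exp (-(C1 + C2) / C2)) R)
    (X1 : Fin m → ℝ) (hX1 : ∀ i, X1 i = ρ * (X0 i * Real.exp (-S i / C2)) / M) :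
    ((∀ i, 0 ≤ X1 i) ∧ ∑ i, X1 i ≤ R) ∧
    (∀ X : Fin m → ℝ, (∀ i, 0 ≤ X i) → ∑ i, X i ≤ R → X ≠ X1 →
      C1 * (∑ i, X1 i) + (∑ i, S i * X1 i) + C2 * (∑ i, X1 i * Real.log (X1 i / X0 i))
        < C1 * (∑ i, X i) + (∑ i, S i * X i) + C2 * (∑ i, X i * Real.log (X i / X0 i))) := by
  obtain rfl : X1 = entropicProx X0 S C1 C2 R := by subst hM hρ; exact funext hX1
  have := Fin.pos_iff_nonempty.mp hm
  exact entropic_prox_unique_minimizer_general hX0 S C1 hC2 hR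
end

section
/- Correctness of the lazy primal (multiplicative) update. Let d, k ≥ 1, n ≥ 1, γ > 0, λ ≥ 0, R > 0, L = log(2dk). Let U ∈ ℝ^{2d×k} have strictly positive entries, let l* ∈ [k], η̄ ∈ ℝ^{2d}, and let η ∈ ℝ^{2d×k} be the matrix whose l*-th column is η̄ and all other columns are zero. Define the multiplicative update U⁺_{il} = U_{il} · e^{−2γRL·η_{il}/n} · ν with M = Σ_{i,l} U_{il} · e^{−2γRL·η_{il}/n} and ν = min{ e^{−2γRLλ}, R/M }. Suppose Ũ ∈ ℝ^{2d×k}, α ∈ ℝ^{2d}, π ∈ ℝ^{2d} satisfy Ũ(i,:)·α_i = U(i,:) and π_i = Σ_{l=1}^k U_{il} for every i. Define q_i = e^{−2γRL·η̄_i/n}, μ_i = π_i − α_i·Ũ_{i,l*}·(1 − q_i), M' = Σ_i μ_i, ν' = min{ e^{−2γRLλ}, R/M' }, and the lazily updated quantities: Ũ⁺ equal to Ũ except Ũ⁺_{i,l*} = Ũ_{i,l*}·q_i, α⁺_i = ν'·α_i, and π⁺_i = ν'·μ_i. Then M' = M (hence ν' = ν), Ũ⁺(i,:)·α⁺_i =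 U⁺(i,:) for every i, and π⁺_i = Σ_{l=1}^k U⁺_{il} for every i. -/
open scoped BigOperators

/-! Multiplying column `j` by `q` lowers the `i`-th row sum only through the entry
`(i, j)`, by `U i j * (1 - q i)`, and the representation recovers that entry as `α i * Ut i j`.
Rescaling the whole matrix commutes with the representation, so it is absorbed into `α` and `π`. -/

section Sum

variable {κ A : Type*} [Fintype κ] [NonAssocRing A]

theorem sum_mul_eq_sum_sub_of_forall_ne (f w : κ → A) {j : κ} (hw : ∀ l ≠ j, w l = 1) :
    ∑ l, f l * w l = ∑ l, f l - f j * (1 - w j) := by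
  have hsingle : ∑ l, f l * (1 - w l) = f j * (1 - w j) :=
    Fintype.sum_eq_single j fun l hl => by rw [hw l hl, sub_self, mul_zero]
  rw [← hsingle, ← Finset.sum_sub_distrib]
  exact Finset.sum_congr rfl fun l _ => by rw [mul_sub, mul_one, sub_sub_cancel]

end Sum

/-- The invariant of the lazy algorithm: the matrix `U` is stored as `Ut` together with one
scale `α i` per row, and `π` caches the row sums of `U`. -/
def IsLazyRepr {ι κ A : Type*} [Fintype κ] [NonUnitalNonAssocSemiring A]
    (U Ut : Matrix ι κ A) (α π : ι → A) : Prop :=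
  (∀ i l, Ut i l * α i = U i l) ∧ ∀ i, π i = ∑ l, U i l

namespace IsLazyRepr

open scoped Matrix

variable {ι κ A : Type*} [Fintype κ]

section Semiring

variable [NonUnitalNonAssocSemiring A] {U Ut : Matrix ι κ A} {α π : ι → A}

theorem sum_eq [Fintype ι] (h : IsLazyRepr U Ut α π) : ∑ i, π i = ∑ i, ∑ l, U i l :=
  Fintype.sum_congr _ _ h.2

theorem smul {S : Type*} [DistribSMul S A] [SMulCommClass S A A]
    (h : IsLazyRepr U Ut α π) (c : S) : IsLazyRepr (c • U) Ut (c • α) (c • π) := by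
  refine ⟨fun i l => ?_, fun i => ?_⟩
  · rw [Pi.smul_apply, mul_smul_comm, h.1, Matrix.smul_apply]
  · simp only [Pi.smul_apply, Matrix.smul_apply, h.2, Finset.smul_sum]

end Semiring

theorem hadamard_of_forall_ne [CommRing A] {U Ut W : Matrix ι κ A} {α π : ι → A} {j : κ}
    (h : IsLazyRepr U Ut α π) (hW : ∀ i, ∀ l ≠ j, W i l = 1) :
    IsLazyRepr (U ⊙ W) (Ut ⊙ W) α fun i => π i - α i * Ut i j * (1 - W i j) := by
  refine ⟨fun i l => ?_, fun i => ?_⟩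
  · rw [Matrix.hadamard_apply, mul_right_comm, h.1, Matrix.hadamard_apply]
  · simp only [Matrix.hadamard_apply]
    rw [sum_mul_eq_sum_sub_of_forall_ne (U i) (W i) (hW i), h.2, mul_comm (α i), h.1]

end IsLazyRepr

open scoped Matrix in
theorem lazy_primal_update_correct_general {ι κ A : Type*} [Fintype ι] [Fintype κ]
    [DecidableEq κ] [CommRing A] (rescale : A → A)
    {U W Uplus Ut Utp : Matrix ι κ A} {α π q μ αp πp : ι → A} {j : κ}
    (hrepr : IsLazyRepr U Ut α π)
    (hW : ∀ i l, W i l = if l = j then q i else 1)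
    (hUplus : ∀ i l, Uplus i l = U i l * W i l * rescale (∑ i, ∑ l, U i l * W i l))
    (hμ : ∀ i, μ i = π i - α i * Ut i j * (1 - q i))
    (hUtp : ∀ i l, Utp i l = if l = j then Ut i l * q i else Ut i l)
    (hαp : ∀ i, αp i = rescale (∑ i, μ i) * α i)
    (hπp : ∀ i, πp i = rescale (∑ i, μ i) * μ i) :
    ∑ i, μ i = ∑ i, ∑ l, U i l * W i l ∧ IsLazyRepr Uplus Utp αp πp := by
  have hscaled : IsLazyRepr (U ⊙ W) Utp α μ := by
    have hUtp_eq : Utp = Ut ⊙ W := by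
      ext i l
      rw [hUtp, Matrix.hadamard_apply, hW, mul_ite, mul_one]
    have hμ_eq : μ = fun i => π i - α i * Ut i j * (1 - W i j) := by
      ext i
      rw [hμ, hW, if_pos rfl]
    rw [hUtp_eq, hμ_eq]
    exact hrepr.hadamard_of_forall_ne fun i l hl => by rw [hW, if_neg hl]
  have hmass : ∑ i, μ i = ∑ i, ∑ l, U i l * W i l := hscaled.sum_eq
  have hUplus_eq : Uplus = rescale (∑ i, μ i) • (U ⊙ W) := by
    ext i l
    rw [hUplus, ← hmass, mul_comm, Matrix.smul_apply, Matrix.hadamard_apply, smul_eq_mul]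
  have hαp_eq : αp = rescale (∑ i, μ i) • α := funext hαp
  have hπp_eq : πp = rescale (∑ i, μ i) • μ := funext hπp
  rw [hUplus_eq, hαp_eq, hπp_eq]
  exact ⟨hmass, hscaled.smul _⟩

/-- Correctness of the lazy primal (multiplicative) update in the sublinear
multiclass ℓ₁-SVM algorithm: if `Ũ(i,:)·α_i = U(i,:)` and `π_i = Σ_l U_{il}`,
then after the lazy update one has `M' = M` (hence `ν' = ν`),
`Ũ⁺(i,:)·α⁺_i = U⁺(i,:)`, and `π⁺_i = Σ_l U⁺_{il}`. -/
theorem lazy_primal_update_correct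
    (d k n : ℕ) (hd : 0 < d) (hk : 0 < k) (hn : 0 < n)
    (γ lam R : ℝ) (hγ : 0 < γ) (hlam : 0 ≤ lam) (hR : 0 < R)
    (L : ℝ) (hL : L = Real.log (2 * d * k))
    (U : Matrix (Fin (2 * d)) (Fin k) ℝ) (hU : ∀ i l, 0 < U i l)
    (lstar : Fin k) (ηb : Fin (2 * d) → ℝ)
    (η : Matrix (Fin (2 * d)) (Fin k) ℝ)
    (hη : ∀ i l, η i l = if l = lstar then ηb i else 0)
    (M : ℝ) (hM : M = ∑ i, ∑ l, U i l * Real.exp (-(2 * γ * R * L * η i l) / n))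
    (ν : ℝ) (hν : ν = min (Real.exp (-(2 * γ * R * L * lam))) (R / M))
    (Uplus : Matrix (Fin (2 * d)) (Fin k) ℝ)
    (hUplus : ∀ i l, Uplus i l = U i l * Real.exp (-(2 * γ * R * L * η i l) / n) * ν)
    (Ut : Matrix (Fin (2 * d)) (Fin k) ℝ) (α π : Fin (2 * d) → ℝ)
    (hUt : ∀ i l, Ut i l * α i = U i l)
    (hπ : ∀ i, π i = ∑ l, U i l)
    (q : Fin (2 * d) → ℝ) (hq : ∀ i, q i = Real.exp (-(2 * γ * R * L * ηb i) / n))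
    (μ : Fin (2 * d) → ℝ) (hμ : ∀ i, μ i = π i - α i * Ut i lstar * (1 - q i))
    (M' : ℝ) (hM' : M' = ∑ i, μ i)
    (ν' : ℝ) (hν' : ν' = min (Real.exp (-(2 * γ * R * L * lam))) (R / M'))
    (Utp : Matrix (Fin (2 * d)) (Fin k) ℝ)
    (hUtp : ∀ i l, Utp i l = if l = lstar then Ut i l * q i else Ut i l)
    (αp : Fin (2 * d) → ℝ) (hαp : ∀ i, αp i = ν' * α i)
    (πp : Fin (2 * d) → ℝ) (hπp : ∀ i, πp i = ν' * μ i) :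
    M' = M ∧ (∀ i l, Utp i l * αp i = Uplus i l) ∧ (∀ i, πp i = ∑ l, Uplus i l) := by
  subst hM hν hM' hν'
  exact lazy_primal_update_correct_general
    (fun m => min (Real.exp (-(2 * γ * R * L * lam))) (R / m)) ⟨hUt, hπ⟩
    (fun i l => by rw [hη, hq]; split_ifs <;> simp) hUplus hμ hUtp hαp hπp
end

section
/- Correctness of the lazy dual update for the multiclass hinge loss. Let n ≥ 1, k ≥ 2, γ > 0. Let V ∈ ℝ^{n×k} have strictly positive entries with each row in Δ_k, let y ∈ [k]^n, and let Y ∈ ℝ^{n×k} have rows Y(j,:) = e_{y_j}ᵀ. Let l* ∈ [k] and ξ̄ ∈ ℝ^n, and let ξ ∈ ℝ^{n×k} be the matrix whose l*-th column is ξ̄ and all other columns are zero. Define χ_j = Σ_{m=1}^k V_{jm} · exp( 2γ·log(k)·(ξ_{jm} − Y_{jm}) ) and V⁺_{jl} = V_{jl} · exp( 2γ·log(k)·(ξ_{jl} − Y_{jl}) ) / χ_j. Then, with ω_j = e^{2γ·log(k)·ξ̄_j}, ε_j = e^{−2γ·log(k)·Y_{j,l*}} and θ = e^{−2γ·log(k)}: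 (i) χ_j = 1 − V_{j,l*}·(1 − ω_j ε_j) − 𝟙[l* ≠ y_j]·V_{j,y_j}·(1 − θ) for every j; (ii) every row of V⁺ lies in Δ_k with strictly positive entries, and ‖V⁺(j,:) − Y(j,:)‖_1 = 2 − 2·V⁺_{j,y_j} for every j. -/
open scoped BigOperators

/-! With `η = 2 * γ * log k`, the factor `exp (η * (ξ j m - Y j m))` is `1` unless `m` is `lstar` or
`y j`, so `χ j` differs from `∑ m, V j m = 1` by at most two terms. In column `lstar` the factor is
`ω j * ε j` whether or not `lstar = y j`, because `ε j` absorbs the contribution of `Y`; if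
`lstar ≠ y j`, the factor in column `y j` is `θ`. For the `ℓ₁` distance, the mass that a point of
the simplex misses at a vertex equals the mass it carries away from that vertex. -/

section FiniteSums

variable {ι R : Type*}

theorem mul_pos_of_pos_of_forall_pos [MulZeroClass R] [PartialOrder R] [PosMulStrictMono R]
    {p w : ι → R} (hp : 0 < p) (hw : ∀ i, 0 < w i) : 0 < fun i => p i * w i := by
  obtain ⟨hle, i, hi⟩ := Pi.lt_def.1 hp
  exact Pi.lt_def.2 ⟨fun l => mul_nonneg (hle l) (hw l).le, i, mul_pos hi (hw i)⟩

variable [Fintype ι]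

theorem div_sum_mem_stdSimplex [Semifield R] [LinearOrder R] [IsStrictOrderedRing R] {w : ι → R}
    (hw : 0 < w) : (fun i => w i / ∑ m, w m) ∈ stdSimplex R ι := by
  have hsum : 0 < ∑ m, w m := Fintype.sum_pos hw
  refine ⟨fun i => div_nonneg (hw.le i) hsum.le, ?_⟩
  rw [← Finset.sum_div, div_self hsum.ne']

theorem pos_of_mem_stdSimplex [Semiring R] [PartialOrder R] [Nontrivial R] {p : ι → R}
    (hp : p ∈ stdSimplex R ι) : 0 < p := by
  refine lt_of_le_of_ne hp.1 ?_
  rintro rfl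
  simpa using hp.2

variable [DecidableEq ι]

theorem sum_mul_eq_sum_sub_of_eq_one_off_pair [NonAssocRing R] (p w : ι → R) {a b : ι}
    (hw : ∀ m, m ≠ a → m ≠ b → w m = 1) :
    ∑ m, p m * w m =
      ∑ m, p m - p a * (1 - w a) - (if a ≠ b then 1 else 0) * (p b * (1 - w b)) := by
  have deficit : ∑ m, p m * (1 - w m) =
      p a * (1 - w a) + (if a ≠ b then 1 else 0) * (p b * (1 - w b)) := by
    have off_pair : ∀ m, m ≠ a ∧ m ≠ b → p m * (1 - w m) = 0 := fun m hm => by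
      rw [hw m hm.1 hm.2, sub_self, mul_zero]
    rcases eq_or_ne a b with rfl | hab
    · rw [Fintype.sum_eq_single a fun m hm => off_pair m ⟨hm, hm⟩, if_neg (not_not.2 rfl),
        zero_mul, add_zero]
    · rw [Fintype.sum_eq_add a b hab off_pair, if_pos hab, one_mul]
  rw [sub_sub, ← deficit, ← Finset.sum_sub_distrib]
  simp only [mul_sub, mul_one, sub_sub_cancel]

theorem sum_abs_sub_single_of_mem_stdSimplex [Ring R] [LinearOrder R] [IsOrderedRing R]
    {p : ι → R} (hp : p ∈ stdSimplex R ι) (i : ι) :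
    ∑ l, |p l - (Pi.single i 1 : ι → R) l| = 2 - 2 * p i := by
  have abs_sub_single : ∀ l, |p l - (Pi.single i 1 : ι → R) l| =
      p l + (Pi.single i (1 - 2 * p i) : ι → R) l := by
    intro l
    rcases eq_or_ne l i with rfl | hl
    · rw [Pi.single_eq_same, Pi.single_eq_same,
        abs_of_nonpos (sub_nonpos.2 (mem_Icc_of_mem_stdSimplex hp l).2)]
      noncomm_ring
    · rw [Pi.single_eq_of_ne hl, Pi.single_eq_of_ne hl, sub_zero, add_zero, abs_of_nonneg (hp.1 l)]
  calc ∑ l, |p l - (Pi.single i 1 : ι → R) l|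
      = ∑ l, p l + ∑ l, (Pi.single i (1 - 2 * p i) : ι → R) l := by
        simp only [abs_sub_single, Finset.sum_add_distrib]
    _ = 1 + (1 - 2 * p i) := by rw [hp.2, Fintype.sum_pi_single']
    _ = 2 - 2 * p i := by rw [← add_sub_assoc, one_add_one_eq_two]

end FiniteSums

section EntropicMirrorStep

variable {ι : Type*} [Fintype ι]

/-- The entropic mirror-descent step on the simplex: the weights `p` are multiplied by `exp (g l)`
and renormalized. The step size is absorbed into the (ascent) direction `g`. -/
noncomputable def entropicMirrorStep (p g : ι → ℝ) (l : ι) : ℝ :=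
  p l * Real.exp (g l) / ∑ m, p m * Real.exp (g m)

theorem entropicMirrorStep_mem_stdSimplex {p : ι → ℝ} (hp : 0 < p) (g : ι → ℝ) :
    entropicMirrorStep p g ∈ stdSimplex ℝ ι :=
  div_sum_mem_stdSimplex (mul_pos_of_pos_of_forall_pos hp fun _ => Real.exp_pos _)

theorem entropicMirrorStep_pos {p : ι → ℝ} (hp : 0 ≤ p) (g : ι → ℝ) {l : ι} (hl : 0 < p l) :
    0 < entropicMirrorStep p g l :=
  have p_pos : 0 < p := Pi.lt_def.2 ⟨hp, l, hl⟩
  div_pos (mul_pos hl (Real.exp_pos _))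
    (Fintype.sum_pos (mul_pos_of_pos_of_forall_pos p_pos fun _ => Real.exp_pos _))

theorem sum_mul_exp_single_sub_single [DecidableEq ι] (p : ι → ℝ) (η x : ℝ) (a b : ι) :
    ∑ m, p m * Real.exp (η * ((Pi.single a x : ι → ℝ) m - (Pi.single b 1 : ι → ℝ) m)) =
      ∑ m, p m
        - p a * (1 - Real.exp (η * x) * Real.exp (-(η * (Pi.single b 1 : ι → ℝ) a)))
        - (if a ≠ b then 1 else 0) * (p b * (1 - Real.exp (-η))) := by
  set w : ι → ℝ := fun m =>
    Real.exp (η * ((Pi.single a x : ι → ℝ) m - (Pi.single b 1 : ι → ℝ) m)) with hw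
  have w_off_pair : ∀ m, m ≠ a → m ≠ b → w m = 1 := fun m ha hb => by
    simp only [hw, Pi.single_eq_of_ne ha, Pi.single_eq_of_ne hb, sub_self, mul_zero, Real.exp_zero]
  have w_left : w a = Real.exp (η * x) * Real.exp (-(η * (Pi.single b 1 : ι → ℝ) a)) := by
    simp only [hw, Pi.single_eq_same]
    rw [← Real.exp_add, mul_sub, sub_eq_add_neg]
  have w_right (hab : a ≠ b) : w b = Real.exp (-η) := by
    simp only [hw, Pi.single_eq_of_ne hab.symm, Pi.single_eq_same, zero_sub, mul_neg_one]
  rw [sum_mul_eq_sum_sub_of_eq_one_off_pair p w w_off_pair, w_left]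
  split_ifs with hab
  · rw [w_right hab]
  · rw [zero_mul, zero_mul]

end EntropicMirrorStep

theorem lazy_dual_update_correct_general {J L : Type*} [Fintype L] [DecidableEq L] (η : ℝ)
    (V : Matrix J L ℝ) (hVrow : ∀ j, V j ∈ stdSimplex ℝ L)
    (y : J → L) (Y : Matrix J L ℝ) (hY : ∀ j l, Y j l = if l = y j then 1 else 0)
    (lstar : L) (ξb : J → ℝ)
    (ξ : Matrix J L ℝ) (hξ : ∀ j l, ξ j l = if l = lstar then ξb j else 0)
    (χ : J → ℝ) (hχ : ∀ j, χ j = ∑ m, V j m * Real.exp (η * (ξ j m - Y j m)))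
    (Vplus : Matrix J L ℝ)
    (hVplus : ∀ j l, Vplus j l = V j l * Real.exp (η * (ξ j l - Y j l)) / χ j)
    (ω : J → ℝ) (hω : ∀ j, ω j = Real.exp (η * ξb j))
    (ε : J → ℝ) (hε : ∀ j, ε j = Real.exp (-(η * Y j lstar)))
    (θ : ℝ) (hθ : θ = Real.exp (-η)) :
    (∀ j, χ j = 1 - V j lstar * (1 - ω j * ε j)
        - (if lstar ≠ y j then 1 else 0) * (V j (y j) * (1 - θ))) ∧
    (∀ j, Vplus j ∈ stdSimplex ℝ L) ∧
    (∀ j l, 0 < V j l → 0 < Vplus j l) ∧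
    (∀ j, (∑ l, |Vplus j l - Y j l|) = 2 - 2 * Vplus j (y j)) := by
  have Y_eq_single : ∀ j, Y j = Pi.single (y j) 1 := fun j => funext fun l => by
    rw [hY, Pi.single_apply]
  have ξ_eq_single : ∀ j, ξ j = Pi.single lstar (ξb j) := fun j => funext fun l => by
    rw [hξ, Pi.single_apply]
  have Vplus_eq_step : ∀ j, Vplus j = entropicMirrorStep (V j) fun l => η * (ξ j l - Y j l) :=
    fun j => funext fun l => by rw [hVplus, hχ, entropicMirrorStep]
  have Vplus_row : ∀ j, Vplus j ∈ stdSimplex ℝ L := fun j => by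
    rw [Vplus_eq_step]
    exact entropicMirrorStep_mem_stdSimplex (pos_of_mem_stdSimplex (hVrow j)) _
  refine ⟨fun j => ?_, Vplus_row, fun j l hl => ?_, fun j => ?_⟩
  · rw [hχ, hω, hε, hθ, ξ_eq_single, Y_eq_single, sum_mul_exp_single_sub_single, (hVrow j).2]
  · rw [Vplus_eq_step]
    exact entropicMirrorStep_pos (hVrow j).1 _ hl
  · rw [Y_eq_single]
    exact sum_abs_sub_single_of_mem_stdSimplex (Vplus_row j) (y j)

/-- Correctness of the lazy dual update for the multiclass hinge loss:
the normalizer `χ_j` of the entropic mirror-descent dual step (with a gradient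
estimate `ξ` supported on a single column `l*`) has the closed form
`χ_j = 1 − V_{j,l*}(1 − ω_j ε_j) − 𝟙[l* ≠ y_j]·V_{j,y_j}(1 − θ)`;
moreover every row of the updated matrix `V⁺` lies in the probability simplex with
strictly positive entries, and `‖V⁺(j,:) − Y(j,:)‖₁ = 2 − 2·V⁺_{j,y_j}`. -/
theorem lazy_dual_update_correct
    (n k : ℕ) (hn : 0 < n) (hk : 2 ≤ k)
    (γ : ℝ) (hγ : 0 < γ)
    (V : Matrix (Fin n) (Fin k) ℝ)
    (hVpos : ∀ j l, 0 < V j l) (hVrow : ∀ j, V j ∈ stdSimplex ℝ (Fin k))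
    (y : Fin n → Fin k)
    (Y : Matrix (Fin n) (Fin k) ℝ) (hY : ∀ j l, Y j l = if l = y j then 1 else 0)
    (lstar : Fin k) (ξb : Fin n → ℝ)
    (ξ : Matrix (Fin n) (Fin k) ℝ)
    (hξ : ∀ j l, ξ j l = if l = lstar then ξb j else 0)
    (χ : Fin n → ℝ)
    (hχ : ∀ j, χ j = ∑ m, V j m * Real.exp (2 * γ * Real.log k * (ξ j m - Y j m)))
    (Vplus : Matrix (Fin n) (Fin k) ℝ)
    (hVplus : ∀ j l, Vplus j l = V j l * Real.exp (2 * γ * Real.log k * (ξ j l - Y j l)) / χ j)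
    (ω : Fin n → ℝ) (hω : ∀ j, ω j = Real.exp (2 * γ * Real.log k * ξb j))
    (ε : Fin n → ℝ) (hε : ∀ j, ε j = Real.exp (-(2 * γ * Real.log k * Y j lstar)))
    (θ : ℝ) (hθ : θ = Real.exp (-(2 * γ * Real.log k))) :
    (∀ j, χ j = 1 - V j lstar * (1 - ω j * ε j)
        - (if lstar ≠ y j then 1 else 0) * (V j (y j) * (1 - θ))) ∧
    (∀ j, Vplus j ∈ stdSimplex ℝ (Fin k)) ∧
    (∀ j l, 0 < Vplus j l) ∧
    (∀ j, (∑ l, |Vplus j l - Y j l|) = 2 - 2 * Vplus j (y j)) := by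
  have ⟨normalizer, row, pos, dist⟩ := lazy_dual_update_correct_general (2 * γ * Real.log k)
    V hVrow y Y hY lstar ξb ξ hξ χ hχ Vplus hVplus ω hω ε hε θ hθ
  exact ⟨normalizer, row, fun j l => pos j l (hVpos j l), dist⟩
end
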